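/- arXiv:2310.13550 — 4 statements merged into one kernel-verified Lean document; each statement's English description precedes it below -/
import Mathlib

section
/- Let X and Y be countable sets, let p, q : X → ℝ be bounded measures on X, and let p_{Y|X}, q_{Y|X} : X × Y → ℝ be conditional probability kernels, i.e. p_{Y|X}(y|x) ≥ 0, q_{Y|X}(y|x) ≥ 0, and Σ_{y∈Y} p_{Y|X}(y|x) = 1 and Σ_{y∈Y} q_{Y|X}(y|x) = 1 for every x ∈ X. Define joint bounded measures on X × Y by p_{XY}(x,y) = p(x)·p_{Y|X}(y|x) and q_{XY}(x,y) = q(x)·q_{Y|X}(y|x). Then Σ_{x∈X} p(x)·D_H²(p_{Y|X}(·|x), q_{Y|X}(·|x)) ≤ 8·D_H²(p_{XY}, q_{XY}). -/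
/-!
Fix `x` and write `a = √p(x)`, `b = √q(x)`, `u = √p(y|x)`, `v = √q(y|x)`. The inequality
`a² (u - v)² + 2 a (a - b) (u² - v²) ≤ 4 (a u - b v)²` holds for all nonnegative reals
(`weighted_sq_sub_le`). Since both kernels have mass one, the correction term `u² - v²` sums to zero
over `y`, which gives the fibrewise bound `fibre_hellinger_le`; summing over `x` proves the theorem,
with constant `4` in place of `8`.
-/

/-- The term linear in `u ^ 2 - v ^ 2` vanishes when summed over a pair of unit vectors. -/
lemma weighted_sq_sub_le {a b u v : ℝ} (ha : 0 ≤ a) (hb : 0 ≤ b) :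
    a ^ 2 * (u - v) ^ 2 + 2 * a * (a - b) * (u ^ 2 - v ^ 2) ≤ 4 * (a * u - b * v) ^ 2 := by
  -- The two squares below come from `(a u - b v)² - (a - b) (a u² - b v²) = a b (u - v)²` and the
  -- parallelogram bound for `a (u - v) = (a u - b v) + (b - a) v`.
  nlinarith [mul_nonneg (mul_nonneg ha hb) (sq_nonneg (u - v)),
    sq_nonneg ((a * u - b * v) - (b - a) * v)]

lemma sq_sqrt_sub_sqrt_le {s t : ℝ} (hs : 0 ≤ s) (ht : 0 ≤ t) :
    (Real.sqrt s - Real.sqrt t) ^ 2 ≤ s + t := by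
  nlinarith [Real.sq_sqrt hs, Real.sq_sqrt ht,
    mul_nonneg (Real.sqrt_nonneg s) (Real.sqrt_nonneg t)]

lemma summable_sq_sqrt_sub_sqrt {Z : Type*} {f g : Z → ℝ} (hf0 : ∀ z, 0 ≤ f z)
    (hg0 : ∀ z, 0 ≤ g z) (hf : Summable f) (hg : Summable g) :
    Summable fun z => (Real.sqrt (f z) - Real.sqrt (g z)) ^ 2 :=
  Summable.of_nonneg_of_le (fun _ => sq_nonneg _)
    (fun z => sq_sqrt_sub_sqrt_le (hf0 z) (hg0 z)) (hf.add hg)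

lemma summable_of_tsum_eq_one {Y : Type*} {f : Y → ℝ} (hf : ∑' y, f y = 1) : Summable f := by
  by_contra h
  simp [tsum_eq_zero_of_not_summable h] at hf

lemma fibre_hellinger_le {Y : Type*} {s t : ℝ} (hs : 0 ≤ s) (ht : 0 ≤ t) {f g : Y → ℝ}
    (hf0 : ∀ y, 0 ≤ f y) (hg0 : ∀ y, 0 ≤ g y) (hf1 : ∑' y, f y = 1) (hg1 : ∑' y, g y = 1) :
    s * ∑' y, (Real.sqrt (f y) - Real.sqrt (g y)) ^ 2 ≤
      4 * ∑' y, (Real.sqrt (s * f y) - Real.sqrt (t * g y)) ^ 2 := by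
  have hf := summable_of_tsum_eq_one hf1
  have hg := summable_of_tsum_eq_one hg1
  have h₁ := (summable_sq_sqrt_sub_sqrt hf0 hg0 hf hg).mul_left s
  have h₂ := (hf.sub hg).mul_left (2 * Real.sqrt s * (Real.sqrt s - Real.sqrt t))
  have h₃ := (summable_sq_sqrt_sub_sqrt (fun y => mul_nonneg hs (hf0 y))
    (fun y => mul_nonneg ht (hg0 y)) (hf.mul_left s) (hg.mul_left t)).mul_left 4
  have key := (h₁.add h₂).tsum_le_tsum (fun y => ?_) h₃
  · rw [h₁.tsum_add h₂, tsum_mul_left, tsum_mul_left, tsum_mul_left, hf.tsum_sub hg, hf1, hg1,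
      sub_self, mul_zero, add_zero] at key
    exact key
  · have h := weighted_sq_sub_le (u := Real.sqrt (f y)) (v := Real.sqrt (g y))
      (Real.sqrt_nonneg s) (Real.sqrt_nonneg t)
    rwa [Real.sq_sqrt hs, Real.sq_sqrt (hf0 y), Real.sq_sqrt (hg0 y), ← Real.sqrt_mul hs,
      ← Real.sqrt_mul ht] at h

lemma summable_joint {X Y : Type*} {p : X → ℝ} {k : X → Y → ℝ} (hp0 : ∀ x, 0 ≤ p x)
    (hp : Summable p) (hk0 : ∀ x y, 0 ≤ k x y) (hk1 : ∀ x, ∑' y, k x y = 1) :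
    Summable fun z : X × Y => p z.1 * k z.1 z.2 := by
  rw [summable_prod_of_nonneg fun z => mul_nonneg (hp0 _) (hk0 _ _)]
  refine ⟨fun x => (summable_of_tsum_eq_one (hk1 x)).mul_left (p x), ?_⟩
  simpa [tsum_mul_left, hk1] using hp

/-- For bounded measures `p, q` on a countable set `X` and conditional
probability kernels `pk, qk : X → Y → ℝ`, the expected conditional squared Hellinger
distance is at most `8` times the squared Hellinger distance of the joint measures. -/
theorem expected_cond_hellinger_le_joint {X Y : Type*} [Countable X] [Countable Y]
    (p q : X → ℝ) (hp0 : ∀ x, 0 ≤ p x) (hq0 : ∀ x, 0 ≤ q x)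
    (hp : Summable p) (hq : Summable q)
    (pk qk : X → Y → ℝ)
    (hpk0 : ∀ x y, 0 ≤ pk x y) (hqk0 : ∀ x y, 0 ≤ qk x y)
    (hpk1 : ∀ x, ∑' y, pk x y = 1) (hqk1 : ∀ x, ∑' y, qk x y = 1) :
    ∑' x, p x * ((1 / 2) * ∑' y, (Real.sqrt (pk x y) - Real.sqrt (qk x y)) ^ 2) ≤
      8 * ((1 / 2) * ∑' z : X × Y,
        (Real.sqrt (p z.1 * pk z.1 z.2) - Real.sqrt (q z.1 * qk z.1 z.2)) ^ 2) := by
  have hJ := summable_sq_sqrt_sub_sqrt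
    (fun z : X × Y => mul_nonneg (hp0 z.1) (hpk0 z.1 z.2))
    (fun z : X × Y => mul_nonneg (hq0 z.1) (hqk0 z.1 z.2))
    (summable_joint hp0 hp hpk0 hpk1) (summable_joint hq0 hq hqk0 hqk1)
  have hfib : ∀ x, p x * ((1 / 2) * ∑' y, (Real.sqrt (pk x y) - Real.sqrt (qk x y)) ^ 2) ≤
      2 * ∑' y, (Real.sqrt (p x * pk x y) - Real.sqrt (q x * qk x y)) ^ 2 := fun x => by
    linarith [fibre_hellinger_le (hp0 x) (hq0 x) (hpk0 x) (hqk0 x) (hpk1 x) (hqk1 x)]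
  have hR := hJ.prod.mul_left 2
  have hL := Summable.of_nonneg_of_le
    (fun x => mul_nonneg (hp0 x) (mul_nonneg (by norm_num) (tsum_nonneg fun y => sq_nonneg _)))
    hfib hR
  have hle := hL.tsum_le_tsum hfib hR
  rw [tsum_mul_left, ← hJ.tsum_prod] at hle
  have h0 : 0 ≤ ∑' z : X × Y,
      (Real.sqrt (p z.1 * pk z.1 z.2) - Real.sqrt (q z.1 * qk z.1 z.2)) ^ 2 :=
    tsum_nonneg fun z => sq_nonneg _
  linarith
end

section
/- (Elliptical potential lemma, squared form.) Let x_1, …, x_K ∈ ℝ^d satisfy ‖x_k‖₂ ≤ 1 for every k, and suppose the linear span of {x_1, …, x_K} has dimension at most r. Let λ > 0, B > 0, and for each k ∈ {1,…,K} set U_k = λ·I_d + Σ_{t=1}^{k−1} x_t x_tᵀ (a positive definite matrix). Then Σ_{k=1}^{K} min{ x_kᵀ U_k^{−1} x_k , B } ≤ (1+B)·r·log(1 + K/λ). -/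
/-!
Write `u k = x kᵀ (U k)⁻¹ x k ≥ 0`. Two facts carry the proof.

* `min u B ≤ (1 + B) log (1 + u)` for `u ≥ 0`, which follows from `log y ≥ 1 - 1 / y`.
* By the matrix determinant lemma `det (U (k + 1)) = det (U k) (1 + u k)`, so the sum of the
  `log (1 + u k)` telescopes to `log det (λ I + M) - d log λ` with `M = ∑ t, x t x tᵀ`.

The matrix `M` is positive semidefinite, its rank is the dimension of the span of the `x t`, and its
trace is at most `K`. Hence at most `r` of its eigenvalues are nonzero and each is at most `K`, so
`det (λ I + M) ≤ λ ^ d (1 + K / λ) ^ r`.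
-/

open Matrix

lemma min_le_mul_log {u B : ℝ} (hu : 0 ≤ u) (hB : 0 < B) :
    min u B ≤ (1 + B) * Real.log (1 + u) := by
  set m := min u B
  have hm0 : 0 ≤ m := le_min hu hB.le
  have hmu : m ≤ u := min_le_left _ _
  have hmB : m ≤ B := min_le_right _ _
  have h1 : 1 - (1 + m)⁻¹ ≤ Real.log (1 + m) := Real.one_sub_inv_le_log_of_pos (by linarith)
  have h2 : Real.log (1 + m) ≤ Real.log (1 + u) := Real.log_le_log (by linarith) (by linarith)
  have h3 : m = (1 + m) * (1 - (1 + m)⁻¹) := by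
    have : (1 + m) ≠ 0 := by linarith
    field_simp
    ring
  have h4 : 0 ≤ Real.log (1 + u) := Real.log_nonneg (by linarith)
  calc m = (1 + m) * (1 - (1 + m)⁻¹) := h3
    _ ≤ (1 + m) * Real.log (1 + u) := by gcongr; linarith
    _ ≤ (1 + B) * Real.log (1 + u) := by gcongr

lemma det_add_vecMulVec_self {d : ℕ} {A : Matrix (Fin d) (Fin d) ℝ} (hA : IsUnit A.det)
    (v : Fin d → ℝ) :
    (A + vecMulVec v v).det = A.det * (1 + v ⬝ᵥ (A⁻¹ *ᵥ v)) := by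
  rw [vecMulVec_eq Unit, det_add_replicateCol_mul_replicateRow hA, Matrix.mul_assoc,
    ← replicateCol_mulVec, det_unique (n := Unit)]
  simp [Matrix.replicateRow_mul_replicateCol_apply]

lemma posSemidef_vecMulVec_self {d : ℕ} (v : Fin d → ℝ) : (vecMulVec v v).PosSemidef := by
  simpa using posSemidef_vecMulVec_self_star v

/-- The determinant in terms of the eigenvalues `μ i` of `M`: `∏ (λ + μ i)`, where every factor
with `μ i = 0` equals `λ` and every other factor is at most `λ + tr M`. -/
lemma det_smul_one_add_le {d r : ℕ} {M : Matrix (Fin d) (Fin d) ℝ} (hM : M.PosSemidef)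
    (hr : M.rank ≤ r) {c lam : ℝ} (hc : M.trace ≤ c) (hlam : 0 < lam) :
    (lam • (1 : Matrix (Fin d) (Fin d) ℝ) + M).det ≤ lam ^ d * (1 + c / lam) ^ r := by
  set μ := hM.1.eigenvalues with hμ
  have hμ0 : ∀ i, 0 ≤ μ i := hM.eigenvalues_nonneg
  have htr : M.trace = ∑ i, μ i := by simpa using hM.1.trace_eq_sum_eigenvalues
  have hμc : ∀ i, μ i ≤ c := fun i =>
    (Finset.single_le_sum (fun j _ => hμ0 j) (Finset.mem_univ i)).trans (htr ▸ hc)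
  have hc0 : 0 ≤ c := le_trans (htr ▸ Finset.sum_nonneg fun i _ => hμ0 i) hc
  have hdet : (lam • (1 : Matrix (Fin d) (Fin d) ℝ) + M).det = ∏ i, (lam + μ i) := by
    -- Evaluate the characteristic polynomial at `-λ`; the signs `(-1) ^ d` cancel.
    have h := congrArg (Polynomial.eval (-lam)) hM.1.charpoly_eq
    rw [eval_charpoly, Polynomial.eval_prod] at h
    have e : Matrix.scalar (Fin d) (-lam) - M
        = -(lam • (1 : Matrix (Fin d) (Fin d) ℝ) + M) := by
      rw [Matrix.scalar_apply, ← Matrix.smul_one_eq_diagonal, neg_smul]; abel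
    have e2 : ∀ i, Polynomial.eval (-lam) (Polynomial.X - Polynomial.C ((μ i : ℝ)))
        = (-1) * (lam + μ i) := by intro i; simp; ring
    have h' : (-(lam • (1 : Matrix (Fin d) (Fin d) ℝ) + M)).det = ∏ i, (-1) * (lam + μ i) := by
      rw [← e, h]; exact Finset.prod_congr rfl fun i _ => e2 i
    rw [det_neg, Finset.prod_mul_distrib] at h'
    simpa using h'
  have hcard : (Finset.univ.filter fun i => μ i ≠ 0).card ≤ r := by
    rw [hM.1.rank_eq_card_non_zero_eigs, Fintype.card_subtype] at hr
    exact hr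
  have h1 : 1 ≤ 1 + c / lam := by have := div_nonneg hc0 hlam.le; linarith
  calc (lam • (1 : Matrix (Fin d) (Fin d) ℝ) + M).det = ∏ i, (lam + μ i) := hdet
    _ ≤ ∏ i, (lam * if μ i ≠ 0 then 1 + c / lam else 1) := by
        refine Finset.prod_le_prod (fun i _ => by have := hμ0 i; linarith) fun i _ => ?_
        split_ifs with h
        · have : lam * (1 + c / lam) = lam + c := by field_simp
          rw [this]; linarith [hμc i]
        · simp only [not_not] at h
          simp [h]
    _ = lam ^ d * (1 + c / lam) ^ (Finset.univ.filter fun i => μ i ≠ 0).card := by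
        rw [Finset.prod_mul_distrib, ← Finset.prod_filter, Finset.prod_const, Finset.prod_const]
        simp
    _ ≤ lam ^ d * (1 + c / lam) ^ r := by gcongr

open Matrix in
/-- Elliptical potential lemma, squared form. -/
theorem elliptical_potential_sq {d K r : ℕ} (x : Fin K → Fin d → ℝ)
    (hx : ∀ k, ∑ i, (x k i) ^ 2 ≤ 1)
    (hr : Module.finrank ℝ (Submodule.span ℝ (Set.range x)) ≤ r)
    (lam B : ℝ) (hlam : 0 < lam) (hB : 0 < B)
    (U : Fin K → Matrix (Fin d) (Fin d) ℝ)
    (hU : ∀ k, U k = lam • (1 : Matrix (Fin d) (Fin d) ℝ) +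
      ∑ t ∈ Finset.univ.filter (fun t => t < k), vecMulVec (x t) (x t)) :
    ∑ k, min (x k ⬝ᵥ ((U k)⁻¹ *ᵥ x k)) B ≤ (1 + B) * r * Real.log (1 + K / lam) := by
  -- Indexing by `ℕ` makes room for the matrix after the last step, `V K`.
  set V : ℕ → Matrix (Fin d) (Fin d) ℝ := fun n => lam • (1 : Matrix (Fin d) (Fin d) ℝ) +
    ∑ t ∈ Finset.univ.filter (fun t : Fin K => t.val < n), vecMulVec (x t) (x t) with hV
  have hVpd : ∀ n, (V n).PosDef := fun n =>
    (PosDef.one.smul hlam).add_posSemidef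
      (posSemidef_sum _ fun t _ => posSemidef_vecMulVec_self (x t))
  have hUV : ∀ k : Fin K, U k = V k := fun k => by rw [hU k]; rfl
  have hstep : ∀ k : Fin K, V (k + 1) = V k + vecMulVec (x k) (x k) := by
    intro k
    have : Finset.univ.filter (fun t : Fin K => t.val < k.val + 1)
        = insert k (Finset.univ.filter (fun t : Fin K => t.val < k.val)) := by
      ext t
      simp [Fin.ext_iff]
      omega
    simp only [hV]
    rw [this, Finset.sum_insert (by simp)]
    abel
  have hunn : ∀ k : Fin K, 0 ≤ x k ⬝ᵥ ((U k)⁻¹ *ᵥ x k) := by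
    intro k
    rw [hUV]
    simpa using (hVpd k).inv.posSemidef.dotProduct_mulVec_nonneg (x k)
  have hlog : ∀ k : Fin K, Real.log (1 + x k ⬝ᵥ ((U k)⁻¹ *ᵥ x k))
      = Real.log (V (k + 1)).det - Real.log (V k).det := by
    intro k
    have hp := (hVpd k).det_pos
    have hu := hunn k
    rw [hUV] at hu ⊢
    rw [hstep, det_add_vecMulVec_self hp.ne'.isUnit, Real.log_mul hp.ne' (by linarith)]
    ring
  have htel : ∑ k : Fin K, Real.log (1 + x k ⬝ᵥ ((U k)⁻¹ *ᵥ x k))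
      = Real.log (V K).det - Real.log (V 0).det := by
    rw [Finset.sum_congr rfl fun k _ => hlog k,
      Fin.sum_univ_eq_sum_range (fun n => Real.log (V (n + 1)).det - Real.log (V n).det) K,
      Finset.sum_range_sub (fun n => Real.log (V n).det)]
  have hV0 : (V 0).det = lam ^ d := by simp [hV]
  have hVK : (V K).det ≤ lam ^ d * (1 + K / lam) ^ r := by
    have e : V K = lam • (1 : Matrix (Fin d) (Fin d) ℝ) + ∑ t, vecMulVec (x t) (x t) := by
      simp [hV]
    rw [e]
    refine det_smul_one_add_le (posSemidef_sum _ fun t _ => posSemidef_vecMulVec_self (x t))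
      ?_ ?_ hlam
    · have : ∑ t, vecMulVec (x t) (x t) = (Matrix.of x)ᵀ * Matrix.of x := by
        ext i j
        simp [Matrix.sum_apply, vecMulVec_apply, Matrix.mul_apply]
      rw [this, rank_transpose_mul_self, rank_eq_finrank_span_row]
      exact hr
    · rw [trace_sum]
      calc ∑ t, (vecMulVec (x t) (x t)).trace ≤ ∑ _t : Fin K, (1 : ℝ) :=
            Finset.sum_le_sum fun t _ => by
              simpa [trace_vecMulVec, dotProduct, pow_two] using hx t
        _ = K := by simp
  have hpos : 0 < 1 + (K : ℝ) / lam := by positivity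
  have hfin : Real.log (V K).det - Real.log (V 0).det ≤ r * Real.log (1 + K / lam) := by
    have := Real.log_le_log (hVpd K).det_pos hVK
    rw [Real.log_mul (by positivity) (by positivity), Real.log_pow (1 + (K : ℝ) / lam) r] at this
    rw [hV0]
    linarith
  calc ∑ k, min (x k ⬝ᵥ ((U k)⁻¹ *ᵥ x k)) B
      ≤ ∑ k, (1 + B) * Real.log (1 + x k ⬝ᵥ ((U k)⁻¹ *ᵥ x k)) :=
        Finset.sum_le_sum fun k _ => min_le_mul_log (hunn k) hB
    _ = (1 + B) * (Real.log (V K).det - Real.log (V 0).det) := by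
        rw [← Finset.mul_sum, htel]
    _ ≤ (1 + B) * (r * Real.log (1 + K / lam)) := by gcongr
    _ = (1 + B) * r * Real.log (1 + K / lam) := by ring
end

section
/- Let x_1, …, x_K ∈ ℝ^d satisfy ‖x_k‖₂ ≤ 1 for every k, and suppose the linear span of {x_1, …, x_K} has dimension at most r. Then for every λ > 0, det( I_d + (1/λ)·Σ_{k=1}^{K} x_k x_kᵀ ) ≤ (1 + K/λ)^r. -/
/-!
Let `X` be the matrix with rows `x k`, so that `∑ k, x k (x k)ᵀ = Xᵀ X` is positive semidefinite.
Its eigenvalues `μ i` are nonnegative, each is at most their sum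
`trace (Xᵀ X) = ∑ k, ‖x k‖² ≤ K`, and the number of nonzero ones is
`rank (Xᵀ X) = rank X = dim span {x k} ≤ r`. Hence `det (1 + (1/lam) Xᵀ X) = ∏ i, (1 + μ i / lam)`
has at most `r` factors different from `1`, each lying between `1` and `1 + K / lam`.
-/

open Matrix in
theorem det_one_add_smul_eq_prod_eigenvalues {n : Type*} [Fintype n] [DecidableEq n]
    {A : Matrix n n ℝ} (hA : A.IsHermitian) (c : ℝ) :
    (1 + c • A).det = ∏ i, (1 + c * hA.eigenvalues i) := by
  have h : 1 + c • A = (hA.eigenvectorUnitary : Matrix n n ℝ) *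
      diagonal (fun i => 1 + c * hA.eigenvalues i) *
        (star hA.eigenvectorUnitary : Matrix n n ℝ) := by
    have hD : diagonal (fun i => 1 + c * hA.eigenvalues i) =
        1 + c • diagonal hA.eigenvalues := by
      rw [← diagonal_one, ← diagonal_smul, diagonal_add]
      rfl
    have hs := hA.spectral_theorem
    rw [Unitary.conjStarAlgAut_apply] at hs
    conv_lhs => rw [hs]
    rw [hD, mul_add, add_mul, mul_one, Unitary.mul_star_self_of_mem hA.eigenvectorUnitary.2]
    simp
  rw [h, det_mul_comm, ← mul_assoc]
  simp

open Matrix in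
/-- Determinant bound for the regularized Gram matrix of low-rank,
norm-bounded vectors. -/
theorem det_one_add_gram_le {d K r : ℕ} (x : Fin K → Fin d → ℝ)
    (hx : ∀ k, ∑ i, (x k i) ^ 2 ≤ 1)
    (hr : Module.finrank ℝ (Submodule.span ℝ (Set.range x)) ≤ r)
    (lam : ℝ) (hlam : 0 < lam) :
    ((1 : Matrix (Fin d) (Fin d) ℝ) + (1 / lam) • ∑ k, vecMulVec (x k) (x k)).det ≤
      (1 + K / lam) ^ r := by
  have hS : ∑ k, vecMulVec (x k) (x k) = (Matrix.of x)ᵀ * Matrix.of x := by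
    ext i j
    simp [Matrix.sum_apply, vecMulVec_apply, mul_apply]
  rw [hS]
  have hpsd : ((Matrix.of x)ᵀ * Matrix.of x).PosSemidef := by
    simpa using posSemidef_conjTranspose_mul_self (Matrix.of x)
  have hH := hpsd.isHermitian
  have hnn : ∀ i, 0 ≤ hH.eigenvalues i := hpsd.eigenvalues_nonneg
  have htr : ∑ i, hH.eigenvalues i ≤ K := by
    have h := hH.trace_eq_sum_eigenvalues
    simp only [RCLike.ofReal_real_eq_id, id] at h
    rw [← h, ← hS, trace_sum]
    calc ∑ k, (vecMulVec (x k) (x k)).trace ≤ ∑ _k : Fin K, (1 : ℝ) := by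
          refine Finset.sum_le_sum fun k _ => ?_
          simpa [Matrix.trace, vecMulVec_apply, sq] using hx k
      _ = K := by simp
  have hle : ∀ i, hH.eigenvalues i ≤ K := fun i =>
    (Finset.single_le_sum (fun j _ => hnn j) (Finset.mem_univ i)).trans htr
  have hcard : (Finset.univ.filter fun i => hH.eigenvalues i ≠ 0).card ≤ r := by
    rw [← Fintype.card_subtype, ← hH.rank_eq_card_non_zero_eigs, rank_transpose_mul_self,
      rank_eq_finrank_span_row]
    exact hr
  rw [det_one_add_smul_eq_prod_eigenvalues hH]
  calc ∏ i, (1 + 1 / lam * hH.eigenvalues i)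
      = ∏ i with hH.eigenvalues i ≠ 0, (1 + 1 / lam * hH.eigenvalues i) := by
        symm
        refine Finset.prod_filter_of_ne ?_
        intro i _ h h0
        apply h
        simp [h0]
    _ ≤ ∏ i with hH.eigenvalues i ≠ 0, (1 + K / lam) := by
        refine Finset.prod_le_prod (fun i _ => ?_) fun i _ => ?_
        · have := hnn i
          positivity
        · rw [one_div_mul_eq_div]
          have := hle i
          gcongr
    _ = (1 + K / lam) ^ (Finset.univ.filter fun i => hH.eigenvalues i ≠ 0).card := by
        rw [Finset.prod_const]
    _ ≤ (1 + K / lam) ^ r := by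
        refine pow_le_pow_right₀ ?_ hcard
        have : (0 : ℝ) ≤ K / lam := by positivity
        linarith
end

section
/- (Hellinger distance is controlled by the log-likelihood ratio with high probability.) Let T ≥ 1, let X_1, …, X_T be countable sets, and for each t let P_t and Q_t be probability mass functions on X_t such that Q_t(y) > 0 whenever P_t(y) > 0. Then for every δ ∈ (0,1), the product measure (under Π_t P_t) of the event { x ∈ X_1×⋯×X_T : Σ_{t=1}^T (1 − Σ_{y∈X_t} √(P_t(y)·Q_t(y))) > (1/2)·Σ_{t=1}^T log(P_t(x_t)/Q_t(x_t)) + log(1/δ) } is at most δ. (Here 1 − Σ_y √(P_t(y)Q_t(y)) is the squared Hellinger distance between the probability mass functions P_t and Q_t, and the log-likelihood ratios are well defined on the support of the product measure.) -/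
/-!
This is a Chernoff bound with exponent `1/2`. Write `ρ_t = ∑ y, √(P_t y * Q_t y)` for the Hellinger
affinities and `H = ∑ t, (1 - ρ_t)`. On the event, exponentiating the defining inequality gives
`∏ P_t (x_t) ≤ δ * exp H * ∏ √(P_t (x_t) * Q_t (x_t))` (`prod_le_of_event`). Summing over the event
bounds its mass by `δ * exp H * ∏ ρ_t` (`sum_prod_le_prod_tsum`), and `ρ_t ≤ exp (ρ_t - 1)` makes
this at most `δ`. Since all terms are nonnegative it suffices to bound finite partial sums, so
summability on the product space is never needed.
-/

lemma summable_sqrt_mul {X : Type*} {P Q : X → ℝ} (hP0 : ∀ y, 0 ≤ P y) (hQ0 : ∀ y, 0 ≤ Q y)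
    (hP : Summable P) (hQ : Summable Q) : Summable fun y => √(P y * Q y) := by
  refine Summable.of_nonneg_of_le (fun y => Real.sqrt_nonneg _) (fun y => ?_) (hP.add hQ)
  rw [Real.sqrt_le_left (add_nonneg (hP0 y) (hQ0 y))]
  nlinarith [hP0 y, hQ0 y, mul_nonneg (hP0 y) (hQ0 y), sq_nonneg (P y), sq_nonneg (Q y)]

/-- A finite set of points of the product lies in a finite box, over which the sum factorizes. -/
lemma sum_prod_le_prod_tsum {ι : Type*} [Fintype ι] {X : ι → Type*} {g : ∀ t, X t → ℝ}
    (hg0 : ∀ t y, 0 ≤ g t y) (hg : ∀ t, Summable (g t)) (S : Finset (∀ t, X t)) :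
    ∑ x ∈ S, ∏ t, g t (x t) ≤ ∏ t, ∑' y, g t y := by
  classical
  calc ∑ x ∈ S, ∏ t, g t (x t)
      ≤ ∑ x ∈ Fintype.piFinset fun t => S.image fun x => x t, ∏ t, g t (x t) := by
        refine Finset.sum_le_sum_of_subset_of_nonneg (fun x hx => ?_)
          fun x _ _ => Finset.prod_nonneg fun t _ => hg0 t _
        exact Fintype.mem_piFinset.2 fun t => Finset.mem_image_of_mem (fun x => x t) hx
    _ = ∏ t, ∑ y ∈ S.image (fun x => x t), g t y := by
        rw [Finset.prod_univ_sum]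
    _ ≤ ∏ t, ∑' y, g t y :=
        Finset.prod_le_prod (fun t _ => Finset.sum_nonneg fun y _ => hg0 t y)
          fun t _ => (hg t).sum_le_tsum _ fun y _ => hg0 t y

/-- Markov's inequality for `exp (-L / 2)`, with `L` the log-likelihood ratio, in pointwise form. -/
lemma prod_le_of_event {ι : Type*} [Fintype ι] {p q : ι → ℝ} (hp0 : ∀ t, 0 ≤ p t)
    (hpq : ∀ t, 0 < p t → 0 < q t) {δ H : ℝ} (hδ : 0 < δ)
    (h : (1 / 2) * ∑ t, Real.log (p t / q t) + Real.log (1 / δ) < H) :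
    ∏ t, p t ≤ δ * Real.exp H * ∏ t, √(p t * q t) := by
  by_cases hz : ∃ t, p t = 0
  · obtain ⟨t, ht⟩ := hz
    rw [Finset.prod_eq_zero (Finset.mem_univ t) ht]
    have := Finset.prod_nonneg fun t (_ : t ∈ Finset.univ) => Real.sqrt_nonneg (p t * q t)
    positivity
  · push Not at hz
    have hp : ∀ t, 0 < p t := fun t => (hp0 t).lt_of_ne' (hz t)
    have hfac : ∀ t, p t = Real.exp ((1 / 2) * Real.log (p t / q t)) * √(p t * q t) := by
      intro t
      have hpt := hp t
      have hqt := hpq t hpt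
      rw [mul_comm (1 / 2 : ℝ), ← Real.rpow_def_of_pos (div_pos hpt hqt), ← Real.sqrt_eq_rpow,
        ← Real.sqrt_mul (div_pos hpt hqt).le]
      have : p t / q t * (p t * q t) = p t ^ 2 := by field_simp
      rw [this, Real.sqrt_sq hpt.le]
    have hprod : ∏ t, p t
        = Real.exp ((1 / 2) * ∑ t, Real.log (p t / q t)) * ∏ t, √(p t * q t) := by
      rw [Finset.mul_sum, Real.exp_sum, ← Finset.prod_mul_distrib]
      exact Finset.prod_congr rfl fun t _ => hfac t
    rw [hprod]
    refine mul_le_mul_of_nonneg_right ?_ (Finset.prod_nonneg fun t _ => Real.sqrt_nonneg _)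
    rw [one_div δ, Real.log_inv] at h
    calc _ ≤ Real.exp (Real.log δ + H) := Real.exp_le_exp.2 (by linarith)
      _ = δ * Real.exp H := by rw [Real.exp_add, Real.exp_log hδ]

/-- With probability at least `1 - δ` under the product measure, the sum of
squared Hellinger distances is controlled by half the log-likelihood ratio plus `log(1/δ)`. -/
theorem hellinger_le_loglik_whp {T : ℕ} (hT : 1 ≤ T)
    (X : Fin T → Type*) [∀ t, Countable (X t)]
    (P Q : ∀ t, X t → ℝ)
    (hP0 : ∀ t y, 0 ≤ P t y) (hP1 : ∀ t, ∑' y, P t y = 1)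
    (hQ0 : ∀ t y, 0 ≤ Q t y) (hQ1 : ∀ t, ∑' y, Q t y = 1)
    (hsupp : ∀ t y, 0 < P t y → 0 < Q t y)
    (δ : ℝ) (hδ : δ ∈ Set.Ioo (0 : ℝ) 1) :
    ∑' s : {x : ∀ t, X t //
        (1 / 2) * ∑ t, Real.log (P t (x t) / Q t (x t)) + Real.log (1 / δ) <
          ∑ t, (1 - ∑' y, Real.sqrt (P t y * Q t y))},
      ∏ t, P t (s.1 t) ≤ δ := by
  -- A family with nonzero `tsum` is summable.
  have hsum : ∀ {Y : Type _} {f : Y → ℝ}, ∑' y, f y = 1 → Summable f := fun {Y f} hf => by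
    by_contra hns
    rw [tsum_eq_zero_of_not_summable hns] at hf
    exact zero_ne_one hf
  have hg : ∀ t, Summable fun y => √(P t y * Q t y) := fun t =>
    summable_sqrt_mul (hP0 t) (hQ0 t) (hsum (hP1 t)) (hsum (hQ1 t))
  set H : ℝ := ∑ t, (1 - ∑' y, √(P t y * Q t y)) with hH
  refine tsum_le_of_sum_le' hδ.1.le fun S => ?_
  calc ∑ s ∈ S, ∏ t, P t (s.1 t)
      ≤ ∑ s ∈ S, δ * Real.exp H * ∏ t, √(P t (s.1 t) * Q t (s.1 t)) :=
        Finset.sum_le_sum fun s _ => prod_le_of_event (fun t => hP0 t _)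
          (fun t => hsupp t _) hδ.1 s.2
    _ = δ * Real.exp H * ∑ x ∈ S.map (Function.Embedding.subtype _),
          ∏ t, √(P t (x t) * Q t (x t)) := by
        rw [Finset.sum_map, Finset.mul_sum]
        rfl
    _ ≤ δ * Real.exp H * ∏ t, ∑' y, √(P t y * Q t y) :=
        mul_le_mul_of_nonneg_left
          (sum_prod_le_prod_tsum (g := fun t y => √(P t y * Q t y))
            (fun t y => Real.sqrt_nonneg _) hg _)
          (mul_nonneg hδ.1.le (Real.exp_pos _).le)
    _ = δ * ∏ t, (Real.exp (1 - ∑' y, √(P t y * Q t y)) * ∑' y, √(P t y * Q t y)) := by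
        rw [hH, Real.exp_sum, Finset.prod_mul_distrib, mul_assoc]
    _ ≤ δ * 1 := by
        refine mul_le_mul_of_nonneg_left (Finset.prod_le_one (fun t _ => ?_) fun t _ => ?_) hδ.1.le
        · exact mul_nonneg (Real.exp_pos _).le (tsum_nonneg fun y => Real.sqrt_nonneg _)
        · have h1 := Real.add_one_le_exp (∑' y, √(P t y * Q t y) - 1)
          calc _ ≤ Real.exp (1 - ∑' y, √(P t y * Q t y)) *
                Real.exp (∑' y, √(P t y * Q t y) - 1) :=
                mul_le_mul_of_nonneg_left (by linarith) (Real.exp_pos _).le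
            _ = 1 := by rw [← Real.exp_add]; simp
    _ = δ := mul_one δ
end
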